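/- arXiv:2212.04396 — 4 statements merged into one kernel-verified Lean document; each statement's English description precedes it below -/
import Mathlib

section
/- Let V be a matrix whose columns span 𝒱, and let (M̂,N̂) ∈ ℱ(𝒱) and (M̄,N̄) ∈ ℱ(𝒱). Then: (1) there exists a matrix K̂ such that B(M̂ − M̄)V = B N̂ K̂; (2) for such K̂ there exists a matrix Ĥ_M with Im(Ĥ_M) ⊆ ker(B) ∩ ker(D) such that (M̂ − M̄)V = N̂ K̂ + Ĥ_M; and (3) there exist a matrix L̂ and a matrix Ĥ_N with Im(Ĥ_N) ⊆ ker(B) ∩ ker(D) such that N̄ = N̂ L̂ + Ĥ_N. -/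
/-!
A matrix factors through another, `X = Y * K`, as soon as its column space is contained in that
of `Y` (`exists_mul_of_range_le`), so every claim reduces to inclusions of column spaces.

For two friends, subtracting the defining conditions on `𝒱` gives `B (M̂ - M̄) 𝒱 ⊆ 𝒱` and
`D (M̂ - M̄) 𝒱 = 0`. Hence `B (M̂ - M̄) V` has its columns in `B (ker D) ∩ 𝒱 = Im (B N̂)`, which
yields `K̂`. Likewise `Im (B N̄) = B (ker D) ∩ 𝒱 = Im (B N̂)` yields `L̂`. In both cases the
remainder `H = X - N̂ K` is killed by `B` by the choice of the factor, and by `D` because both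
`X` and `N̂` are.
-/

open Matrix

noncomputable section

/-- The linear map between Euclidean spaces induced by a real matrix. -/
def matL {ι κ : Type*} [Fintype ι] [Fintype κ] [DecidableEq κ]
    (A : Matrix ι κ ℝ) : EuclideanSpace ℝ κ →ₗ[ℝ] EuclideanSpace ℝ ι :=
  Matrix.toEuclideanLin A

variable {ι κ ρ σ : Type*} [Fintype ι] [DecidableEq ι] [Fintype κ] [DecidableEq κ]
  [Fintype ρ] [DecidableEq ρ] [Fintype σ] [DecidableEq σ]

/-- `W` is an output-nulling subspace for the system `(A,B,C,D)`. -/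
def IsOutputNulling (A : Matrix ι ι ℝ) (B : Matrix ι κ ℝ)
    (C : Matrix ρ ι ℝ) (D : Matrix ρ κ ℝ)
    (W : Submodule ℝ (EuclideanSpace ℝ ι)) : Prop :=
  ∃ M : Matrix κ ι ℝ,
    (∀ v ∈ W, matL (A + B * M) v ∈ W) ∧ (∀ v ∈ W, matL (C + D * M) v = 0)

/-- `V` is the maximal output-nulling subspace for the system `(A,B,C,D)`. -/
def IsMaxOutputNulling (A : Matrix ι ι ℝ) (B : Matrix ι κ ℝ)
    (C : Matrix ρ ι ℝ) (D : Matrix ρ κ ℝ)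
    (V : Submodule ℝ (EuclideanSpace ℝ ι)) : Prop :=
  IsOutputNulling A B C D V ∧
    ∀ W : Submodule ℝ (EuclideanSpace ℝ ι), IsOutputNulling A B C D W → W ≤ V

/-- `(M, N)` is a friend of the (maximal output-nulling) subspace `V`. -/
def IsFriend (A : Matrix ι ι ℝ) (B : Matrix ι κ ℝ)
    (C : Matrix ρ ι ℝ) (D : Matrix ρ κ ℝ)
    (V : Submodule ℝ (EuclideanSpace ℝ ι))
    (M : Matrix κ ι ℝ) (N : Matrix κ σ ℝ) : Prop :=
  (∀ v ∈ V, matL (A + B * M) v ∈ V) ∧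
  (∀ v ∈ V, matL (C + D * M) v = 0) ∧
  (LinearMap.range (matL N) ≤ LinearMap.ker (matL D)) ∧
  (LinearMap.range (matL (B * N)) =
    (LinearMap.ker (matL D)).map (matL B) ⊓ V)

theorem matL_mul {a b c : ℕ} (X : Matrix (Fin a) (Fin b) ℝ) (Y : Matrix (Fin b) (Fin c) ℝ)
    (v : EuclideanSpace ℝ (Fin c)) : matL (X * Y) v = matL X (matL Y v) := by
  simp [matL, Matrix.toLpLin_apply, Matrix.mulVec_mulVec]

theorem matL_add {a b : ℕ} (X Y : Matrix (Fin a) (Fin b) ℝ) (v : EuclideanSpace ℝ (Fin b)) :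
    matL (X + Y) v = matL X v + matL Y v := by
  simp [matL]

theorem matL_sub {a b : ℕ} (X Y : Matrix (Fin a) (Fin b) ℝ) (v : EuclideanSpace ℝ (Fin b)) :
    matL (X - Y) v = matL X v - matL Y v := by
  simp [matL]

theorem matL_ext {a b : ℕ} {X Y : Matrix (Fin a) (Fin b) ℝ}
    (h : ∀ v, matL X v = matL Y v) : X = Y :=
  Matrix.toEuclideanLin.injective (LinearMap.ext h)

theorem exists_mul_of_range_le {a b c : ℕ} (X : Matrix (Fin a) (Fin c) ℝ)
    (Y : Matrix (Fin a) (Fin b) ℝ)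
    (h : LinearMap.range (matL X) ≤ LinearMap.range (matL Y)) :
    ∃ K : Matrix (Fin b) (Fin c) ℝ, X = Y * K := by
  obtain ⟨g, hg⟩ := Module.projective_lifting_property (matL Y).rangeRestrict
    ((matL X).codRestrict _ fun v => h ⟨v, rfl⟩) (matL Y).surjective_rangeRestrict
  refine ⟨Matrix.toEuclideanLin.symm g, matL_ext fun v => ?_⟩
  have hv : matL Y (g v) = matL X v := congrArg Subtype.val (LinearMap.congr_fun hg v)
  rw [matL_mul, ← hv]
  simp [matL]

/-- If `B X = B N K` and `D` kills the columns of both `X` and `N`, then the remainder `X - N K`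
has its columns in `ker B ∩ ker D`. -/
theorem exists_remainder {n m p s t : ℕ} (B : Matrix (Fin n) (Fin m) ℝ)
    (D : Matrix (Fin p) (Fin m) ℝ) (N : Matrix (Fin m) (Fin s) ℝ) (X : Matrix (Fin m) (Fin t) ℝ)
    (K : Matrix (Fin s) (Fin t) ℝ)
    (hN : LinearMap.range (matL N) ≤ LinearMap.ker (matL D))
    (hX : LinearMap.range (matL X) ≤ LinearMap.ker (matL D))
    (hK : B * X = B * N * K) :
    ∃ H : Matrix (Fin m) (Fin t) ℝ,
      LinearMap.range (matL H) ≤ LinearMap.ker (matL B) ⊓ LinearMap.ker (matL D) ∧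
      X = N * K + H := by
  refine ⟨X - N * K, ?_, by abel⟩
  rintro _ ⟨v, rfl⟩
  refine ⟨?_, ?_⟩
  · rw [SetLike.mem_coe, LinearMap.mem_ker, ← matL_mul, Matrix.mul_sub, hK, Matrix.mul_assoc,
      sub_self]
    simp [matL]
  · rw [matL_sub, matL_mul]
    exact Submodule.sub_mem _ (hX ⟨v, rfl⟩) (hN ⟨_, rfl⟩)

/-- Lemma 1 of the paper: relationship between any two friends of `𝒱`. -/
theorem lemma_friends {n m p s s' t : ℕ}
    (A : Matrix (Fin n) (Fin n) ℝ) (B : Matrix (Fin n) (Fin m) ℝ)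
    (C : Matrix (Fin p) (Fin n) ℝ) (D : Matrix (Fin p) (Fin m) ℝ)
    (V : Submodule ℝ (EuclideanSpace ℝ (Fin n)))
    (hV : IsMaxOutputNulling A B C D V)
    (Vmat : Matrix (Fin n) (Fin t) ℝ)
    (hVmat : LinearMap.range (matL Vmat) = V)
    (Mh : Matrix (Fin m) (Fin n) ℝ) (Nh : Matrix (Fin m) (Fin s) ℝ)
    (Mb : Matrix (Fin m) (Fin n) ℝ) (Nb : Matrix (Fin m) (Fin s') ℝ)
    (hMNh : IsFriend A B C D V Mh Nh) (hMNb : IsFriend A B C D V Mb Nb) :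
    (∃ K : Matrix (Fin s) (Fin t) ℝ, B * ((Mh - Mb) * Vmat) = B * Nh * K) ∧
    (∀ K : Matrix (Fin s) (Fin t) ℝ, B * ((Mh - Mb) * Vmat) = B * Nh * K →
      ∃ H : Matrix (Fin m) (Fin t) ℝ,
        LinearMap.range (matL H) ≤ LinearMap.ker (matL B) ⊓ LinearMap.ker (matL D) ∧
        (Mh - Mb) * Vmat = Nh * K + H) ∧
    (∃ (L : Matrix (Fin s) (Fin s') ℝ) (H : Matrix (Fin m) (Fin s') ℝ),
      LinearMap.range (matL H) ≤ LinearMap.ker (matL B) ⊓ LinearMap.ker (matL D) ∧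
      Nb = Nh * L + H) := by
  obtain ⟨hAh, hCh, hNh, hBh⟩ := hMNh
  obtain ⟨hAb, hCb, hNb, hBb⟩ := hMNb
  have hmem : ∀ v, matL Vmat v ∈ V := fun v => hVmat ▸ ⟨v, rfl⟩
  have hD : LinearMap.range (matL ((Mh - Mb) * Vmat)) ≤ LinearMap.ker (matL D) := by
    rintro _ ⟨v, rfl⟩
    have h1 := hCh _ (hmem v)
    have h2 := hCb _ (hmem v)
    rw [matL_add, matL_mul] at h1 h2
    rw [LinearMap.mem_ker, matL_mul, matL_sub, map_sub, sub_eq_zero]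
    exact add_left_cancel (h1.trans h2.symm)
  have hB : ∀ v, matL (B * ((Mh - Mb) * Vmat)) v ∈ V := by
    intro v
    have h := V.sub_mem (hAh _ (hmem v)) (hAb _ (hmem v))
    rw [matL_add, matL_add, matL_mul, matL_mul, add_sub_add_left_eq_sub] at h
    rwa [matL_mul, matL_mul, matL_sub, map_sub]
  refine ⟨?_, fun K hK => exists_remainder B D Nh _ K hNh hD hK, ?_⟩
  · apply exists_mul_of_range_le
    rw [hBh]
    rintro _ ⟨v, rfl⟩
    exact ⟨⟨_, hD ⟨v, rfl⟩, (matL_mul _ _ _).symm⟩, hB v⟩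
  · obtain ⟨L, hL⟩ := exists_mul_of_range_le (B * Nb) (B * Nh) (hBb.trans hBh.symm).le
    exact ⟨L, exists_remainder B D Nh Nb L hNh hNb hL⟩
end
end

section
/- Let 𝒱 and 𝒲 be subspaces of a finite-dimensional real inner product space E, and let P_𝒱 and P_𝒲 be the orthogonal projections of E onto 𝒱 and 𝒲, respectively, regarded as linear maps E → E. Then the range of the linear map P_𝒱 + P_𝒲 equals 𝒱 + 𝒲. -/
/-!
`T = P_V + P_W` is symmetric, so `(range T)ᗮ = ker T`. If `T x = 0`, then
`0 = ⟪T x, x⟫ = ‖P_V x‖² + ‖P_W x‖²`, whence `x ∈ Vᗮ ⊓ Wᗮ = (V ⊔ W)ᗮ`; the reverse inclusion is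
immediate. In finite dimension, subspaces with equal orthogonal complements are equal.
-/

noncomputable section

open Submodule

/-- Lemma 4 of the paper: the range of the sum of the orthogonal projections onto
two subspaces `𝒱` and `𝒲` of a finite-dimensional real inner product space
equals `𝒱 + 𝒲`. -/
theorem range_add_orthogonalProjection
    {E : Type*} [NormedAddCommGroup E] [InnerProductSpace ℝ E]
    [FiniteDimensional ℝ E] (V W : Submodule ℝ E) :
    LinearMap.range
        (((V.subtypeL.comp (orthogonalProjection V)) +
          (W.subtypeL.comp (orthogonalProjection W)) : E →L[ℝ] E) :
          E →ₗ[ℝ] E) = V ⊔ W := by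
  change LinearMap.range ((V.starProjection + W.starProjection : E →L[ℝ] E) : E →ₗ[ℝ] E) = V ⊔ W
  have hsymm : ((V.starProjection + W.starProjection : E →L[ℝ] E) : E →ₗ[ℝ] E).IsSymmetric :=
    V.starProjection_isSymmetric.add W.starProjection_isSymmetric
  rw [← Submodule.orthogonal_orthogonal (LinearMap.range _), hsymm.orthogonal_range,
    ← Submodule.orthogonal_orthogonal (V ⊔ W), ← Submodule.inf_orthogonal]
  congr 1
  ext x
  rw [LinearMap.mem_ker, Submodule.mem_inf, ← starProjection_apply_eq_zero_iff,
    ← starProjection_apply_eq_zero_iff]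
  change V.starProjection x + W.starProjection x = 0 ↔ _
  refine ⟨fun h => ?_, fun ⟨hV, hW⟩ => by rw [hV, hW, add_zero]⟩
  have hinner : inner ℝ (V.starProjection x) x + inner ℝ (W.starProjection x) x = 0 := by
    rw [← inner_add_left, h, inner_zero_left]
  have hV : inner ℝ (V.starProjection x) x = ‖V.starProjection x‖ ^ 2 :=
    V.re_inner_starProjection_eq_normSq x
  have hW : inner ℝ (W.starProjection x) x = ‖W.starProjection x‖ ^ 2 :=
    W.re_inner_starProjection_eq_normSq x
  rw [hV, hW] at hinner
  rw [← norm_eq_zero, ← norm_eq_zero (a := W.starProjection x)]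
  constructor <;> nlinarith [sq_nonneg ‖V.starProjection x‖, sq_nonneg ‖W.starProjection x‖]
end
end

section
/- Suppose there exists a friend (M̂,N̂) ∈ ℱ(𝒱) such that F N̂ ≠ 0 or (E+F M̂)(A+B M̂)^j B N̂ ≠ 0 for some 0 ≤ j ≤ n−1. Then for every δ > 0 there exists an input sequence {a_k}_{k≥0} such that, with zero initial state, the output is identically zero, y_k(0,a) = 0 for all k ∈ ℕ, while ‖z_K(0,a)‖ ≥ δ for some K ∈ ℕ; i.e., a perfectly stealthy attack of arbitrarily large impact exists. -/
/-!
The attack is one impulse filtered through the friend `(M, N)`: inject `a_0 = N u` and afterwards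
apply the feedback `a_k = M x_k`. The state is then `x_{k+1} = (A + B M)^k B N u`, which stays in
the output-nulling subspace because `Im (B N) ⊆ V` and `(A + B M) V ⊆ V`; hence the output
vanishes for `k ≥ 1`, and `y_0 = D N u = 0` because `Im N ⊆ ker D`. The impact is `z_0 = F N u`
and `z_{j+1} = (E + F M) (A + B M)^j B N u`, so a nonzero matrix among these gives some `u` with
nonzero impact, and by linearity in `u` a rescaling makes the impact as large as desired.
-/

open Matrix

noncomputable section

variable {ι κ ρ σ : Type*} [Fintype ι] [DecidableEq ι] [Fintype κ] [DecidableEq κ]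
  [Fintype ρ] [DecidableEq ρ] [Fintype σ] [DecidableEq σ]

/-- State trajectory of `x_{k+1} = A x_k + B a_k` from initial state `x0`
and input sequence `a`. -/
def stateTraj (A : Matrix ι ι ℝ) (B : Matrix ι κ ℝ)
    (x0 : EuclideanSpace ℝ ι) (a : ℕ → EuclideanSpace ℝ κ) :
    ℕ → EuclideanSpace ℝ ι
  | 0 => x0
  | k + 1 => matL A (stateTraj A B x0 a k) + matL B (a k)

/-- Output trajectory `y_k = C x_k + D a_k` of the system. -/
def outTraj (A : Matrix ι ι ℝ) (B : Matrix ι κ ℝ)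
    (C : Matrix ρ ι ℝ) (D : Matrix ρ κ ℝ)
    (x0 : EuclideanSpace ℝ ι) (a : ℕ → EuclideanSpace ℝ κ) (k : ℕ) :
    EuclideanSpace ℝ ρ :=
  matL C (stateTraj A B x0 a k) + matL D (a k)

lemma matL_mul_apply (P : Matrix ρ ι ℝ) (Q : Matrix ι κ ℝ) (v : EuclideanSpace ℝ κ) :
    matL (P * Q) v = matL P (matL Q v) := by
  simp [matL, Matrix.toLpLin_apply]

lemma matL_add_apply (P Q : Matrix ρ ι ℝ) (v : EuclideanSpace ℝ ι) :
    matL (P + Q) v = matL P v + matL Q v := by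
  simp [matL]

/-- A nonzero matrix attains values of arbitrarily large Euclidean norm. -/
lemma exists_le_norm_matL {G : Matrix ρ ι ℝ} (hG : G ≠ 0) (δ : ℝ) :
    ∃ u, δ ≤ ‖matL G u‖ := by
  have h : ∃ u, matL G u ≠ 0 := by
    by_contra! h
    apply hG
    apply (Matrix.toEuclideanLin (𝕜 := ℝ)).injective
    ext1 u
    simpa [matL] using h u
  obtain ⟨u, hu⟩ := h
  have hpos : 0 < ‖matL G u‖ := norm_pos_iff.mpr hu
  refine ⟨(δ / ‖matL G u‖) • u, ?_⟩
  rw [map_smul, norm_smul, Real.norm_eq_abs]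
  calc δ = δ / ‖matL G u‖ * ‖matL G u‖ := by field_simp
    _ ≤ |δ / ‖matL G u‖| * ‖matL G u‖ := by gcongr; exact le_abs_self _

/-- The impulse attack: inject `N u` at time `0`, then apply the feedback `M` to the state
`(A + B M)^k B N u` reached at time `k + 1`. -/
def impulseAttack (A : Matrix ι ι ℝ) (B : Matrix ι κ ℝ) (M : Matrix κ ι ℝ) (N : Matrix κ σ ℝ)
    (u : EuclideanSpace ℝ σ) : ℕ → EuclideanSpace ℝ κ
  | 0 => matL N u
  | k + 1 => matL M (matL ((A + B * M) ^ k * (B * N)) u)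

lemma stateTraj_impulseAttack (A : Matrix ι ι ℝ) (B : Matrix ι κ ℝ) (M : Matrix κ ι ℝ)
    (N : Matrix κ σ ℝ) (u : EuclideanSpace ℝ σ) (k : ℕ) :
    stateTraj A B 0 (impulseAttack A B M N u) (k + 1) =
      matL ((A + B * M) ^ k * (B * N)) u := by
  induction k with
  | zero => simp [stateTraj, impulseAttack, matL_mul_apply]
  | succ k ih =>
    rw [stateTraj, ih, impulseAttack, pow_succ', Matrix.mul_assoc (A + B * M),
      matL_mul_apply (A + B * M), matL_add_apply, matL_mul_apply B M]

lemma outTraj_impulseAttack_zero (A : Matrix ι ι ℝ) (B : Matrix ι κ ℝ) (C : Matrix ρ ι ℝ)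
    (D : Matrix ρ κ ℝ) (M : Matrix κ ι ℝ) (N : Matrix κ σ ℝ) (u : EuclideanSpace ℝ σ) :
    outTraj A B C D 0 (impulseAttack A B M N u) 0 = matL (D * N) u := by
  simp [outTraj, stateTraj, impulseAttack, matL_mul_apply]

lemma outTraj_impulseAttack_succ (A : Matrix ι ι ℝ) (B : Matrix ι κ ℝ) (C : Matrix ρ ι ℝ)
    (D : Matrix ρ κ ℝ) (M : Matrix κ ι ℝ) (N : Matrix κ σ ℝ) (u : EuclideanSpace ℝ σ) (k : ℕ) :
    outTraj A B C D 0 (impulseAttack A B M N u) (k + 1) =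
      matL (C + D * M) (matL ((A + B * M) ^ k * (B * N)) u) := by
  rw [outTraj, stateTraj_impulseAttack, impulseAttack, matL_add_apply, matL_mul_apply D M]

/-- For a friend `(M, N)` of `V`, the states reached by the impulse attack lie in `V`. -/
lemma IsFriend.pow_mul_mem {A : Matrix ι ι ℝ} {B : Matrix ι κ ℝ} {C : Matrix ρ ι ℝ}
    {D : Matrix ρ κ ℝ} {V : Submodule ℝ (EuclideanSpace ℝ ι)} {M : Matrix κ ι ℝ}
    {N : Matrix κ σ ℝ} (h : IsFriend A B C D V M N) (u : EuclideanSpace ℝ σ) (k : ℕ) :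
    matL ((A + B * M) ^ k * (B * N)) u ∈ V := by
  obtain ⟨hA, -, -, hBN⟩ := h
  induction k with
  | zero =>
    have hu : matL (B * N) u ∈ LinearMap.range (matL (B * N)) := ⟨u, rfl⟩
    rw [hBN] at hu
    simpa using hu.2
  | succ k ih =>
    rw [pow_succ', Matrix.mul_assoc (A + B * M), matL_mul_apply (A + B * M)]
    exact hA _ ih

/-- For a friend `(M, N)`, the impulse attack is invisible at the output. -/
lemma IsFriend.outTraj_impulseAttack {A : Matrix ι ι ℝ} {B : Matrix ι κ ℝ} {C : Matrix ρ ι ℝ}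
    {D : Matrix ρ κ ℝ} {V : Submodule ℝ (EuclideanSpace ℝ ι)} {M : Matrix κ ι ℝ}
    {N : Matrix κ σ ℝ} (h : IsFriend A B C D V M N) (u : EuclideanSpace ℝ σ) (k : ℕ) :
    outTraj A B C D 0 (impulseAttack A B M N u) k = 0 := by
  cases k with
  | zero =>
    rw [outTraj_impulseAttack_zero, matL_mul_apply]
    exact h.2.2.1 ⟨u, rfl⟩
  | succ k =>
    rw [outTraj_impulseAttack_succ]
    exact h.2.1 _ (h.pow_mul_mem u k)

/-- If some friend `(M̂, N̂)` of `𝒱` has `F N̂ ≠ 0` or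
`(E+FM̂)(A+BM̂)^j B N̂ ≠ 0` for some `0 ≤ j ≤ n-1`, then perfectly stealthy
attacks of arbitrarily large impact exist. -/
theorem stealthy_attack_of_nonzero_L {n m p r s : ℕ}
    (A : Matrix (Fin n) (Fin n) ℝ) (B : Matrix (Fin n) (Fin m) ℝ)
    (C : Matrix (Fin p) (Fin n) ℝ) (D : Matrix (Fin p) (Fin m) ℝ)
    (E : Matrix (Fin r) (Fin n) ℝ) (F : Matrix (Fin r) (Fin m) ℝ)
    (V : Submodule ℝ (EuclideanSpace ℝ (Fin n)))
    (hV : IsMaxOutputNulling A B C D V)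
    (Mh : Matrix (Fin m) (Fin n) ℝ) (Nh : Matrix (Fin m) (Fin s) ℝ)
    (hMN : IsFriend A B C D V Mh Nh)
    (hL : F * Nh ≠ 0 ∨
      ∃ j : ℕ, j < n ∧ (E + F * Mh) * (A + B * Mh) ^ j * (B * Nh) ≠ 0) :
    ∀ δ : ℝ, 0 < δ →
      ∃ a : ℕ → EuclideanSpace ℝ (Fin m),
        (∀ k : ℕ, outTraj A B C D 0 a k = 0) ∧
        ∃ K : ℕ, δ ≤ ‖outTraj A B E F 0 a K‖ := by
  intro δ _
  rcases hL with hF | ⟨j, -, hj⟩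
  · obtain ⟨u, hu⟩ := exists_le_norm_matL hF δ
    refine ⟨impulseAttack A B Mh Nh u, hMN.outTraj_impulseAttack u, 0, ?_⟩
    rwa [outTraj_impulseAttack_zero]
  · obtain ⟨u, hu⟩ := exists_le_norm_matL hj δ
    refine ⟨impulseAttack A B Mh Nh u, hMN.outTraj_impulseAttack u, j + 1, ?_⟩
    rwa [outTraj_impulseAttack_succ, ← matL_mul_apply, ← Matrix.mul_assoc]
end
end

section
/- Assume 𝒱 ≠ {0}, fix (M̂,N̂) ∈ ℱ(𝒱), a basis matrix V* of 𝒱*, and B̂_N with B N̂ = V* B̂_N. Suppose conditions (i) and (ii) of Theorem 1 do not hold and that ker((E+FM̂)V*) = {0}. Then B̂_N = 0, and the system Σ^Δ is vulnerable if and only if the complexification of (A+BM̂)|_{V*} has an eigenvalue λ ∈ ℂ with |λ| ≥ 1. -/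
/-!
Failure of condition (ii) gives `(E+FM̂)BN̂ = (E+FM̂)V*B̂_N = 0`, and injectivity of `(E+FM̂)V*`
then gives `B̂_N = 0`. Hence `B(ker D) ∩ 𝒱 = Im(BN̂) = 0`, which drives the rest.

Stable implies detectable (`detectable_of_stable`). Along trajectories from the origin with
`‖y_k‖ ≤ 1`, more and more quantities are shown to be bounded (`BddByOutput`). The tool is that in
finite dimension `g ξ` is bounded when `f ξ` is and `ker f ⊆ ker g`. The maximal output-nulling
subspace is the limit of the finite decreasing chain of `k`-step nulling states, so the state modulo
`𝒱` is bounded (`bdd_mod_V`). Writing `a_k = M̂x_k + b_k`, the vectors `B b_k` modulo `𝒱` and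
`D b_k` are bounded; since `B(ker D) ∩ 𝒱 = 0` and condition (i) fails, `B b_k` and `F b_k` are
bounded. The coordinates of `x_k` along `𝒱*` obey `v_{k+1} = Φ̂ v_k + (bounded)`, and they are
bounded because Gelfand's formula makes the powers of `Φ̂` decay geometrically (`bibo_bound`); here
`x_k` lies in the controllable subspace, so boundedness modulo `𝒱` is boundedness modulo `𝒱*`.
Thus `z_k` is bounded.

Unstable implies vulnerable. Every vector of `𝒱*` is reachable in `n` steps; superposing such
transients with the feedback `M̂`, any bounded disturbance can be injected into
`v_{k+1} = Φ̂ v_k + h_{k+1}` at the price of a bounded output, the motion in `𝒱*` itself being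
invisible at `y` and faithfully visible at `z`. Detectability would keep `v` bounded
(`bounded_of_detectable`), but an eigenvalue `|λ| ≥ 1` can be excited in resonance so that `v` is
unbounded (`not_bounded_of_unstable`); this covers the modulus one case, where the free motion
alone stays bounded.
-/

open Matrix

noncomputable section

variable {ι κ ρ σ : Type*} [Fintype ι] [DecidableEq ι] [Fintype κ] [DecidableEq κ]
  [Fintype ρ] [DecidableEq ρ] [Fintype σ] [DecidableEq σ]

/-- The system (with zero initial state, no noise) is detectable: some severity
threshold `δ` is always revealed at output level `ε`. -/
def Detectable {n m p r : ℕ}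
    (A : Matrix (Fin n) (Fin n) ℝ) (B : Matrix (Fin n) (Fin m) ℝ)
    (C : Matrix (Fin p) (Fin n) ℝ) (D : Matrix (Fin p) (Fin m) ℝ)
    (E : Matrix (Fin r) (Fin n) ℝ) (F : Matrix (Fin r) (Fin m) ℝ) : Prop :=
  ∃ δ : ℝ, 0 < δ ∧ ∃ ε : ℝ, 0 < ε ∧
    ∀ a : ℕ → EuclideanSpace ℝ (Fin m),
      (∃ kz : ℕ, δ ≤ ‖outTraj A B E F 0 a kz‖) →
      ∃ ky : ℕ, ε ≤ ‖outTraj A B C D 0 a ky‖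

/-- The controllable subspace of the pair `(A, B)`. -/
def ctrlSubspace {n m : ℕ}
    (A : Matrix (Fin n) (Fin n) ℝ) (B : Matrix (Fin n) (Fin m) ℝ) :
    Submodule ℝ (EuclideanSpace ℝ (Fin n)) :=
  ⨆ j : Fin n, LinearMap.range (matL (A ^ (j : ℕ) * B))

/-! ### Linear algebra in finite dimension -/

section LinearAlgebra

/-- Every linear map of vector spaces has a generalized inverse: `f ∘ r ∘ f = f`. -/
lemma exists_genInv {X Y : Type*} [AddCommGroup X] [Module ℝ X] [AddCommGroup Y] [Module ℝ Y]
    (f : X →ₗ[ℝ] Y) : ∃ r : Y →ₗ[ℝ] X, ∀ x, f (r (f x)) = f x := by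
  obtain ⟨r, hr⟩ := f.rangeRestrict.exists_rightInverse_of_surjective f.range_rangeRestrict
  obtain ⟨r', hr'⟩ := LinearMap.exists_extend r
  refine ⟨r', fun x => ?_⟩
  have h1 : r' (f x) = r ⟨f x, x, rfl⟩ := LinearMap.congr_fun hr' ⟨f x, x, rfl⟩
  have h2 := congrArg Subtype.val (LinearMap.congr_fun hr ⟨f x, x, rfl⟩)
  rw [h1]
  exact h2

/-- In finite dimension, if `g` vanishes on `S ∩ ker f`, then `g` is a bounded function of `f`
on `S`. -/
lemma exists_bound_on {X Y Z : Type*} [NormedAddCommGroup X] [NormedSpace ℝ X]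
    [NormedAddCommGroup Y] [NormedSpace ℝ Y] [FiniteDimensional ℝ Y]
    [NormedAddCommGroup Z] [NormedSpace ℝ Z]
    (S : Submodule ℝ X) (f : X →ₗ[ℝ] Y) (g : X →ₗ[ℝ] Z) (h : ∀ x ∈ S, f x = 0 → g x = 0) :
    ∃ c : ℝ, 0 ≤ c ∧ ∀ x ∈ S, ‖g x‖ ≤ c * ‖f x‖ := by
  obtain ⟨r, hr⟩ := exists_genInv (f ∘ₗ S.subtype)
  let L : Y →L[ℝ] Z := LinearMap.toContinuousLinearMap (g ∘ₗ S.subtype ∘ₗ r)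
  refine ⟨‖L‖, norm_nonneg _, fun x hx => ?_⟩
  have h1 : L (f x) = g x := by
    have h2 := hr ⟨x, hx⟩
    have h3 : g (((r (f x) : S) : X) - x) = 0 := by
      refine h _ (S.sub_mem (r (f x)).2 hx) ?_
      rw [map_sub, sub_eq_zero]
      exact h2
    rw [map_sub, sub_eq_zero] at h3
    exact h3
  rw [← h1]
  exact L.le_opNorm _

lemma exists_bound {X Y Z : Type*} [NormedAddCommGroup X] [NormedSpace ℝ X]
    [NormedAddCommGroup Y] [NormedSpace ℝ Y] [FiniteDimensional ℝ Y]
    [NormedAddCommGroup Z] [NormedSpace ℝ Z]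
    (f : X →ₗ[ℝ] Y) (g : X →ₗ[ℝ] Z) (h : ∀ x, f x = 0 → g x = 0) :
    ∃ c : ℝ, 0 ≤ c ∧ ∀ x, ‖g x‖ ≤ c * ‖f x‖ := by
  obtain ⟨c, hc, hb⟩ := exists_bound_on ⊤ f g (fun x _ => h x)
  exact ⟨c, hc, fun x => hb x trivial⟩

lemma exists_ker_eq {X : Type*} [AddCommGroup X] [Module ℝ X] (W : Submodule ℝ X) :
    ∃ Q : X →ₗ[ℝ] X, ∀ x, Q x = 0 ↔ x ∈ W := by
  obtain ⟨r, hr⟩ := exists_genInv W.subtype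
  refine ⟨LinearMap.id - W.subtype ∘ₗ r, fun x => ?_⟩
  constructor
  · intro h
    have : x = (r x : X) := by simpa [sub_eq_zero] using h
    rw [this]; exact (r x).2
  · intro h
    have : (r x : X) = x := hr ⟨x, h⟩
    simp [this]

end LinearAlgebra

section MatrixMaps

variable {n m p : ℕ}

lemma matL_mul_s10 (A : Matrix (Fin n) (Fin m) ℝ) (B : Matrix (Fin m) (Fin p) ℝ)
    (x : EuclideanSpace ℝ (Fin p)) : matL (A * B) x = matL A (matL B x) := by
  simp [matL, Matrix.toLpLin_apply, Matrix.mulVec_mulVec]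

lemma matL_add_s10 (A B : Matrix (Fin n) (Fin m) ℝ) (x : EuclideanSpace ℝ (Fin m)) :
    matL (A + B) x = matL A x + matL B x := by
  simp [matL]

lemma matL_eq_zero {A : Matrix (Fin n) (Fin m) ℝ} (h : ∀ x, matL A x = 0) : A = 0 := by
  have : Matrix.toEuclideanLin A = 0 := LinearMap.ext h
  simpa using this

lemma exists_matL (f : EuclideanSpace ℝ (Fin m) →ₗ[ℝ] EuclideanSpace ℝ (Fin n)) :
    ∃ A : Matrix (Fin n) (Fin m) ℝ, matL A = f :=
  ⟨Matrix.toEuclideanLin.symm f, by simp [matL]⟩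

end MatrixMaps

/-! ### The controllable subspace -/

section Controllable

variable {n m : ℕ} (A : Matrix (Fin n) (Fin n) ℝ) (B : Matrix (Fin n) (Fin m) ℝ)

/-- By Cayley–Hamilton all powers of `A`, not only those below `n`, map `Im B` into the
controllable subspace. -/
lemma pow_mul_mem_ctrl (k : ℕ) (u : EuclideanSpace ℝ (Fin m)) :
    matL (A ^ k * B) u ∈ ctrlSubspace A B := by
  rcases Nat.eq_zero_or_pos n with rfl | hn
  · rw [Subsingleton.elim (matL (A ^ k * B) u) 0]
    exact zero_mem _
  have hdeg : (Polynomial.X ^ k %ₘ A.charpoly).natDegree < n := by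
    have h := Polynomial.natDegree_modByMonic_lt (Polynomial.X ^ k) A.charpoly_monic (by
      intro h
      have := A.charpoly_natDegree_eq_dim
      rw [h] at this
      simp at this
      omega)
    simpa using h
  have hsum : matL (A ^ k * B) u = ∑ j ∈ Finset.range n,
      (Polynomial.X ^ k %ₘ A.charpoly).coeff j • matL (A ^ j * B) u := by
    rw [A.pow_eq_aeval_mod_charpoly, Polynomial.aeval_eq_sum_range' hdeg, Matrix.sum_mul]
    simp [matL]
  rw [hsum]
  refine Submodule.sum_mem _ fun j hj => Submodule.smul_mem _ _ ?_
  exact Submodule.mem_iSup_of_mem (⟨j, Finset.mem_range.1 hj⟩ : Fin n) ⟨u, rfl⟩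

lemma ctrl_invariant {x : EuclideanSpace ℝ (Fin n)} (hx : x ∈ ctrlSubspace A B) :
    matL A x ∈ ctrlSubspace A B := by
  have : ctrlSubspace A B ≤ (ctrlSubspace A B).comap (matL A) := by
    refine iSup_le fun j => ?_
    rintro _ ⟨u, rfl⟩
    rw [Submodule.mem_comap, ← matL_mul_s10, ← Matrix.mul_assoc, ← pow_succ']
    exact pow_mul_mem_ctrl A B _ u
  exact this hx

lemma stateTraj_mem_ctrl (a : ℕ → EuclideanSpace ℝ (Fin m)) (k : ℕ) :
    stateTraj A B 0 a k ∈ ctrlSubspace A B := by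
  induction k with
  | zero => exact zero_mem _
  | succ k ih =>
    refine add_mem (ctrl_invariant A B ih) ?_
    simpa using pow_mul_mem_ctrl A B 0 (a k)

/-- Every family `G` of controllable states is reached from the origin in `n` steps by inputs
`U i` depending linearly on the parameter; `X i` is the state after `i` steps. -/
lemma exists_steering {d : ℕ} (G : EuclideanSpace ℝ (Fin d) →ₗ[ℝ] EuclideanSpace ℝ (Fin n))
    (hG : ∀ g, G g ∈ ctrlSubspace A B) :
    ∃ (U : ℕ → EuclideanSpace ℝ (Fin d) →ₗ[ℝ] EuclideanSpace ℝ (Fin m))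
      (X : ℕ → EuclideanSpace ℝ (Fin d) →ₗ[ℝ] EuclideanSpace ℝ (Fin n)),
      X 0 = 0 ∧ (∀ i g, X (i + 1) g = matL A (X i g) + matL B (U i g)) ∧ X n = G := by
  let R : (Fin n → EuclideanSpace ℝ (Fin m)) →ₗ[ℝ] EuclideanSpace ℝ (Fin n) :=
    ∑ j : Fin n, matL (A ^ (j : ℕ) * B) ∘ₗ LinearMap.proj j
  have hR : ctrlSubspace A B ≤ LinearMap.range R := by
    refine iSup_le fun j => ?_
    rintro _ ⟨u, rfl⟩
    refine ⟨Pi.single j u, ?_⟩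
    simp only [R, LinearMap.sum_apply, LinearMap.comp_apply, LinearMap.proj_apply]
    rw [Finset.sum_eq_single j]
    · simp
    · intro b _ hb
      simp [Pi.single_eq_of_ne hb]
    · simp
  obtain ⟨r, hr⟩ := exists_genInv R
  -- the input multiplying `A ^ j * B` is applied at time `n - 1 - j`
  let U : ℕ → EuclideanSpace ℝ (Fin d) →ₗ[ℝ] EuclideanSpace ℝ (Fin m) := fun i =>
    if h : n - 1 - i < n then LinearMap.proj (⟨n - 1 - i, h⟩ : Fin n) ∘ₗ r ∘ₗ G else 0
  let X : ℕ → EuclideanSpace ℝ (Fin d) →ₗ[ℝ] EuclideanSpace ℝ (Fin n) := fun i =>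
    ∑ j ∈ Finset.range i, matL (A ^ (i - 1 - j) * B) ∘ₗ U j
  refine ⟨U, X, by simp [X], fun i g => ?_, ?_⟩
  · simp only [X, LinearMap.sum_apply, LinearMap.comp_apply, map_sum]
    rw [Finset.sum_range_succ]
    congr 1
    · refine Finset.sum_congr rfl fun j hj => ?_
      have hj := Finset.mem_range.1 hj
      rw [← matL_mul_s10, ← Matrix.mul_assoc, ← pow_succ']
      congr 5
      omega
    · simp
  · ext1 g
    obtain ⟨w, hw⟩ := hR (hG g)
    have h1 : R (r (G g)) = G g := by rw [← hw]; exact hr w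
    rw [← h1]
    simp only [X, R, LinearMap.sum_apply, LinearMap.comp_apply, LinearMap.proj_apply]
    rw [← Finset.sum_range_reflect, Finset.sum_range]
    refine Finset.sum_congr rfl fun j _ => ?_
    have hj := j.2
    have e : n - 1 - (n - 1 - (j : ℕ)) = j := by omega
    have hU : U (n - 1 - (j : ℕ)) g = r (G g) j := by
      simp only [U, e, hj, dif_pos]
      simp
    rw [hU, e]

end Controllable

/-! ### Schur stability -/

section Stable

variable {d : ℕ}

/-- The inclusion `ℝ^d ⊆ ℂ^d`. -/
def toC (x : EuclideanSpace ℝ (Fin d)) : EuclideanSpace ℂ (Fin d) :=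
  WithLp.toLp 2 fun i => (x i : ℂ)

lemma norm_toC (x : EuclideanSpace ℝ (Fin d)) : ‖toC x‖ = ‖x‖ := by
  simp [toC, EuclideanSpace.norm_eq]

lemma toC_pow (Φ : Matrix (Fin d) (Fin d) ℝ) (k : ℕ) (x : EuclideanSpace ℝ (Fin d)) :
    toC (matL (Φ ^ k) x) =
      (Matrix.toEuclideanCLM (n := Fin d) (𝕜 := ℂ) (Φ.map (algebraMap ℝ ℂ)) ^ k) (toC x) := by
  rw [← map_pow, ← Matrix.map_pow]
  generalize Φ ^ k = Ψ
  ext i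
  simp [toC, matL, Matrix.toLpLin_apply, Matrix.mulVec, dotProduct, Matrix.map_apply]

/-- If all complex eigenvalues lie in the open unit disc, Gelfand's formula gives geometric decay
of the powers. -/
lemma exists_pow_bound (Φ : Matrix (Fin d) (Fin d) ℝ)
    (hst : ∀ lam : ℂ, Module.End.HasEigenvalue
      (Matrix.mulVecLin (Φ.map (algebraMap ℝ ℂ))) lam → ‖lam‖ < 1) :
    ∃ c q : ℝ, 0 ≤ c ∧ 0 ≤ q ∧ q < 1 ∧
      ∀ (k : ℕ) (x : EuclideanSpace ℝ (Fin d)), ‖matL (Φ ^ k) x‖ ≤ c * q ^ k * ‖x‖ := by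
  rcases Nat.eq_zero_or_pos d with rfl | hd
  · refine ⟨0, 0, le_rfl, le_rfl, one_pos, fun k x => ?_⟩
    rw [Subsingleton.elim (matL (Φ ^ k) x) 0]
    simp
  have : Nonempty (Fin d) := ⟨⟨0, hd⟩⟩
  set T := Matrix.toEuclideanCLM (n := Fin d) (𝕜 := ℂ) (Φ.map (algebraMap ℝ ℂ)) with hT
  have hrad : spectralRadius ℂ T < ((1 : NNReal) : ENNReal) := by
    refine spectrum.spectralRadius_lt_of_forall_lt T fun z hz => ?_
    rw [hT, AlgEquiv.spectrum_eq, ← Matrix.spectrum_toLin',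
      ← Module.End.hasEigenvalue_iff_mem_spectrum] at hz
    exact_mod_cast hst z hz
  obtain ⟨q, hq1, hq2⟩ := ENNReal.lt_iff_exists_nnreal_btwn.1 hrad
  have hev := (spectrum.pow_nnnorm_pow_one_div_tendsto_nhds_spectralRadius T).eventually_lt_const hq1
  obtain ⟨K, hK⟩ := Filter.eventually_atTop.1 hev
  have hq2 : q < 1 := by exact_mod_cast hq2
  have hlate : ∀ k, max K 1 ≤ k → ‖T ^ k‖ ≤ (q : ℝ) ^ k := by
    intro k hk
    have hk0 : (0 : ℝ) < k := by
      have : 1 ≤ k := le_trans (le_max_right _ _) hk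
      exact_mod_cast this
    have h := ENNReal.rpow_le_rpow (hK k (le_trans (le_max_left _ _) hk)).le hk0.le
    rw [← ENNReal.rpow_mul, one_div, inv_mul_cancel₀ hk0.ne', ENNReal.rpow_one,
      ENNReal.rpow_natCast] at h
    exact_mod_cast h
  have hq0 : (0 : ℝ) < q := by
    have : (0 : ENNReal) < q := lt_of_le_of_lt bot_le hq1
    exact_mod_cast this
  -- the finitely many early powers are absorbed into the constant
  let c : ℝ := 1 + ∑ j ∈ Finset.range (max K 1), ‖T ^ j‖ / (q : ℝ) ^ j
  have hs : 0 ≤ ∑ j ∈ Finset.range (max K 1), ‖T ^ j‖ / (q : ℝ) ^ j :=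
    Finset.sum_nonneg fun j _ => by positivity
  have hall : ∀ k, ‖T ^ k‖ ≤ c * (q : ℝ) ^ k := by
    intro k
    rcases le_or_gt (max K 1) k with hk | hk
    · refine (hlate k hk).trans (le_mul_of_one_le_left (by positivity) ?_)
      simp only [c]
      linarith
    · rw [← div_le_iff₀ (by positivity)]
      have h := Finset.single_le_sum (f := fun j => ‖T ^ j‖ / (q : ℝ) ^ j)
        (fun j _ => by positivity) (Finset.mem_range.2 hk)
      simp only [c]
      linarith
  refine ⟨c, q, by simp only [c]; linarith, hq0.le, by exact_mod_cast hq2, fun k x => ?_⟩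
  rw [← norm_toC, toC_pow, ← norm_toC x]
  exact ContinuousLinearMap.le_of_opNorm_le _ (hall k) _

/-- Bounded-input bounded-state stability of `v_{k+1} = Φ v_k + w_k`. -/
lemma bibo_bound (Φ : Matrix (Fin d) (Fin d) ℝ)
    (hst : ∀ lam : ℂ, Module.End.HasEigenvalue
      (Matrix.mulVecLin (Φ.map (algebraMap ℝ ℂ))) lam → ‖lam‖ < 1) (b : ℝ) :
    ∃ c : ℝ, ∀ v w : ℕ → EuclideanSpace ℝ (Fin d), v 0 = 0 →
      (∀ k, v (k + 1) = matL Φ (v k) + w k) → (∀ k, ‖w k‖ ≤ b) → ∀ k, ‖v k‖ ≤ c := by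
  obtain ⟨c, q, hc, hq0, hq1, hpow⟩ := exists_pow_bound Φ hst
  refine ⟨c * (1 - q)⁻¹ * b, fun v w hv0 hv hw k => ?_⟩
  have hb : 0 ≤ b := le_trans (norm_nonneg _) (hw 0)
  have hsum : v k = ∑ j ∈ Finset.range k, matL (Φ ^ (k - 1 - j)) (w j) := by
    induction k with
    | zero => simpa using hv0
    | succ k ih =>
      rw [hv, ih, Finset.sum_range_succ, map_sum]
      congr 1
      · refine Finset.sum_congr rfl fun j hj => ?_
        have hj := Finset.mem_range.1 hj
        rw [← matL_mul_s10, ← pow_succ']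
        congr 3
        omega
      · simp [matL]
  rw [hsum]
  calc ‖∑ j ∈ Finset.range k, matL (Φ ^ (k - 1 - j)) (w j)‖
      ≤ ∑ j ∈ Finset.range k, c * q ^ (k - 1 - j) * b := by
        refine norm_sum_le_of_le _ fun j _ => (hpow _ _).trans ?_
        gcongr
        exact hw j
    _ = ∑ j ∈ Finset.range k, c * q ^ j * b :=
        Finset.sum_range_reflect (fun j => c * q ^ j * b) k
    _ = c * (∑ j ∈ Finset.range k, q ^ j) * b := by
        rw [Finset.mul_sum, Finset.sum_mul]
    _ ≤ c * (1 - q)⁻¹ * b := by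
        gcongr
        rw [← tsum_geometric_of_lt_one hq0 hq1]
        exact (summable_geometric_of_lt_one hq0 hq1).sum_le_tsum _ fun i _ => by positivity

end Stable

/-! ### Quantities bounded by the output -/

section Bounded

variable {n m p : ℕ}

/-- A quantity `φ` attached to the inputs of the system started at the origin is bounded uniformly
in time and over all inputs whose output satisfies `‖y_k‖ ≤ 1` for every `k`. -/
def BddByOutput {Z : Type*} [Norm Z]
    (A : Matrix (Fin n) (Fin n) ℝ) (B : Matrix (Fin n) (Fin m) ℝ)
    (C : Matrix (Fin p) (Fin n) ℝ) (D : Matrix (Fin p) (Fin m) ℝ)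
    (φ : (ℕ → EuclideanSpace ℝ (Fin m)) → ℕ → Z) : Prop :=
  ∃ c : ℝ, ∀ a, (∀ k, ‖outTraj A B C D 0 a k‖ ≤ 1) → ∀ k, ‖φ a k‖ ≤ c

variable {A : Matrix (Fin n) (Fin n) ℝ} {B : Matrix (Fin n) (Fin m) ℝ}
  {C : Matrix (Fin p) (Fin n) ℝ} {D : Matrix (Fin p) (Fin m) ℝ}

namespace BddByOutput

lemma output : BddByOutput A B C D (fun a k => outTraj A B C D 0 a k) :=
  ⟨1, fun _ h => h⟩

lemma shift {Z : Type*} [Norm Z] {φ : (ℕ → EuclideanSpace ℝ (Fin m)) → ℕ → Z}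
    (h : BddByOutput A B C D φ) : BddByOutput A B C D (fun a k => φ a (k + 1)) := by
  obtain ⟨c, hc⟩ := h
  exact ⟨c, fun a ha k => hc a ha (k + 1)⟩

lemma add {Z : Type*} [SeminormedAddCommGroup Z] {φ ψ : (ℕ → EuclideanSpace ℝ (Fin m)) → ℕ → Z}
    (h : BddByOutput A B C D φ) (h' : BddByOutput A B C D ψ) :
    BddByOutput A B C D (fun a k => φ a k + ψ a k) := by
  obtain ⟨c, hc⟩ := h
  obtain ⟨c', hc'⟩ := h'
  exact ⟨c + c', fun a ha k => norm_add_le_of_le (hc a ha k) (hc' a ha k)⟩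

lemma sub {Z : Type*} [SeminormedAddCommGroup Z] {φ ψ : (ℕ → EuclideanSpace ℝ (Fin m)) → ℕ → Z}
    (h : BddByOutput A B C D φ) (h' : BddByOutput A B C D ψ) :
    BddByOutput A B C D (fun a k => φ a k - ψ a k) := by
  obtain ⟨c, hc⟩ := h
  obtain ⟨c', hc'⟩ := h'
  exact ⟨c + c', fun a ha k => norm_sub_le_of_le (hc a ha k) (hc' a ha k)⟩

lemma prodMk {Y Z : Type*} [SeminormedAddCommGroup Y] [SeminormedAddCommGroup Z]
    {φ : (ℕ → EuclideanSpace ℝ (Fin m)) → ℕ → Y} {ψ : (ℕ → EuclideanSpace ℝ (Fin m)) → ℕ → Z}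
    (h : BddByOutput A B C D φ) (h' : BddByOutput A B C D ψ) :
    BddByOutput A B C D (fun a k => (φ a k, ψ a k)) := by
  obtain ⟨c, hc⟩ := h
  obtain ⟨c', hc'⟩ := h'
  exact ⟨max c c', fun a ha k => max_le_max (hc a ha k) (hc' a ha k)⟩

/-- Boundedness passes from `f ξ` to `g ξ` when `ker f ⊆ ker g` on a subspace `S` in which `ξ`
takes its values. -/
lemma of_ker_on {X Y Z : Type*} [NormedAddCommGroup X] [NormedSpace ℝ X]
    [NormedAddCommGroup Y] [NormedSpace ℝ Y] [FiniteDimensional ℝ Y]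
    [NormedAddCommGroup Z] [NormedSpace ℝ Z]
    {ξ : (ℕ → EuclideanSpace ℝ (Fin m)) → ℕ → X} (S : Submodule ℝ X) (hξ : ∀ a k, ξ a k ∈ S)
    (f : X →ₗ[ℝ] Y) (g : X →ₗ[ℝ] Z) (hfg : ∀ x ∈ S, f x = 0 → g x = 0)
    (h : BddByOutput A B C D (fun a k => f (ξ a k))) :
    BddByOutput A B C D (fun a k => g (ξ a k)) := by
  obtain ⟨c, hc⟩ := h
  obtain ⟨c', hc', hb⟩ := exists_bound_on S f g hfg
  exact ⟨c' * c, fun a ha k => (hb _ (hξ a k)).trans (by gcongr; exact hc a ha k)⟩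

lemma of_ker {X Y Z : Type*} [NormedAddCommGroup X] [NormedSpace ℝ X]
    [NormedAddCommGroup Y] [NormedSpace ℝ Y] [FiniteDimensional ℝ Y]
    [NormedAddCommGroup Z] [NormedSpace ℝ Z]
    {ξ : (ℕ → EuclideanSpace ℝ (Fin m)) → ℕ → X}
    (f : X →ₗ[ℝ] Y) (g : X →ₗ[ℝ] Z) (hfg : ∀ x, f x = 0 → g x = 0)
    (h : BddByOutput A B C D (fun a k => f (ξ a k))) :
    BddByOutput A B C D (fun a k => g (ξ a k)) :=
  of_ker_on ⊤ (fun _ _ => trivial) f g (fun x _ => hfg x) h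

lemma map {X Z : Type*} [NormedAddCommGroup X] [NormedSpace ℝ X] [FiniteDimensional ℝ X]
    [NormedAddCommGroup Z] [NormedSpace ℝ Z]
    {ξ : (ℕ → EuclideanSpace ℝ (Fin m)) → ℕ → X} (g : X →ₗ[ℝ] Z)
    (h : BddByOutput A B C D ξ) : BddByOutput A B C D (fun a k => g (ξ a k)) :=
  of_ker LinearMap.id g (by rintro x rfl; simp) h

end BddByOutput

variable (A B C D)

/-- The states from which the output can be kept at zero during `k` steps. -/
def nullingSteps : ℕ → Submodule ℝ (EuclideanSpace ℝ (Fin n))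
  | 0 => ⊤
  | k + 1 =>
    (((nullingSteps k).comap ((matL A).coprod (matL B))) ⊓
      LinearMap.ker ((matL C).coprod (matL D))).map
        (LinearMap.fst ℝ (EuclideanSpace ℝ (Fin n)) (EuclideanSpace ℝ (Fin m)))

lemma mem_nullingSteps_succ (k : ℕ) (x : EuclideanSpace ℝ (Fin n)) :
    x ∈ nullingSteps A B C D (k + 1) ↔
      ∃ u, matL A x + matL B u ∈ nullingSteps A B C D k ∧ matL C x + matL D u = 0 := by
  simp [nullingSteps]

lemma nullingSteps_antitone : Antitone (nullingSteps A B C D) := by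
  refine antitone_nat_of_succ_le fun k => ?_
  induction k with
  | zero => exact le_top
  | succ k ih =>
    intro x hx
    rw [mem_nullingSteps_succ] at hx ⊢
    obtain ⟨u, h1, h2⟩ := hx
    exact ⟨u, ih h1, h2⟩

/-- A subspace that is output-nulling pointwise admits a common linear feedback. -/
lemma isOutputNulling_of_pointwise (W : Submodule ℝ (EuclideanSpace ℝ (Fin n)))
    (h : ∀ x ∈ W, ∃ u, matL A x + matL B u ∈ W ∧ matL C x + matL D u = 0) :
    IsOutputNulling A B C D W := by
  let G : Submodule ℝ (EuclideanSpace ℝ (Fin n) × EuclideanSpace ℝ (Fin m)) :=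
    W.comap ((matL A).coprod (matL B)) ⊓ LinearMap.ker ((matL C).coprod (matL D))
  obtain ⟨r, hr⟩ := exists_genInv (LinearMap.fst ℝ _ _ ∘ₗ G.subtype)
  obtain ⟨M, hM⟩ := exists_matL (LinearMap.snd ℝ _ _ ∘ₗ G.subtype ∘ₗ r)
  have key : ∀ x ∈ W, matL A x + matL B (matL M x) ∈ W ∧ matL C x + matL D (matL M x) = 0 := by
    intro x hx
    obtain ⟨u, h1, h2⟩ := h x hx
    have hfst : (r x : EuclideanSpace ℝ (Fin n) × EuclideanSpace ℝ (Fin m)).1 = x :=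
      hr ⟨(x, u), by simpa [G] using ⟨h1, h2⟩⟩
    have hsnd : matL M x = (r x : EuclideanSpace ℝ (Fin n) × EuclideanSpace ℝ (Fin m)).2 := by
      rw [hM]; rfl
    have hG := (r x).2
    simp only [G, Submodule.mem_inf, Submodule.mem_comap, LinearMap.mem_ker,
      LinearMap.coprod_apply, hfst, ← hsnd] at hG
    exact hG
  refine ⟨M, fun x hx => ?_, fun x hx => ?_⟩
  · rw [matL_add_s10, matL_mul_s10]; exact (key x hx).1
  · rw [matL_add_s10, matL_mul_s10]; exact (key x hx).2

/-- The decreasing chain `nullingSteps` reaches the maximal output-nulling subspace. -/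
lemma exists_nullingSteps_le (V : Submodule ℝ (EuclideanSpace ℝ (Fin n)))
    (hV : IsMaxOutputNulling A B C D V) : ∃ k, nullingSteps A B C D k ≤ V := by
  obtain ⟨k, hk⟩ := IsArtinian.monotone_stabilizes
    (⟨fun k => OrderDual.toDual (nullingSteps A B C D k), fun i j hij =>
      nullingSteps_antitone A B C D hij⟩ : ℕ →o (Submodule ℝ (EuclideanSpace ℝ (Fin n)))ᵒᵈ)
  have hk1 : nullingSteps A B C D k = nullingSteps A B C D (k + 1) := hk (k + 1) (Nat.le_succ k)
  refine ⟨k, hV.2 _ (isOutputNulling_of_pointwise A B C D _ fun x hx => ?_)⟩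
  rw [hk1] at hx
  exact (mem_nullingSteps_succ A B C D k x).1 hx

/-- The state modulo the `k`-step nulling states is controlled by the output, since `Q x_j` with
`ker Q = nullingSteps (k + 1)` is a function of `x_{j+1}` modulo `nullingSteps k` and of `y_j`. -/
lemma bdd_mod_nullingSteps (k : ℕ)
    (Q : EuclideanSpace ℝ (Fin n) →ₗ[ℝ] EuclideanSpace ℝ (Fin n))
    (hQ : ∀ x ∈ nullingSteps A B C D k, Q x = 0) :
    BddByOutput A B C D (fun a j => Q (stateTraj A B 0 a j)) := by
  induction k generalizing Q with
  | zero =>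
    refine ⟨0, fun a _ j => ?_⟩
    have htop : stateTraj A B 0 a j ∈ (⊤ : Submodule ℝ (EuclideanSpace ℝ (Fin n))) := trivial
    simp [hQ _ htop]
  | succ k ih =>
    obtain ⟨Q', hQ'⟩ := exists_ker_eq (nullingSteps A B C D k)
    have h := ((ih Q' fun x hx => (hQ' x).2 hx).shift).prodMk
      (BddByOutput.output (A := A) (B := B) (C := C) (D := D))
    refine BddByOutput.of_ker (ξ := fun a j => (stateTraj A B 0 a j, a j))
      ((Q' ∘ₗ (matL A).coprod (matL B)).prod ((matL C).coprod (matL D)))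
      (Q ∘ₗ LinearMap.fst ℝ _ _) ?_ h
    rintro ⟨x, u⟩ hx
    refine hQ x ((mem_nullingSteps_succ A B C D k x).2 ⟨u, ?_⟩)
    have hx' : Q' (matL A x + matL B u) = 0 ∧ matL C x + matL D u = 0 := by simpa using hx
    exact ⟨(hQ' _).1 hx'.1, hx'.2⟩

/-- The state modulo the maximal output-nulling subspace is controlled by the output. -/
lemma bdd_mod_V (V : Submodule ℝ (EuclideanSpace ℝ (Fin n)))
    (hV : IsMaxOutputNulling A B C D V)
    (Q : EuclideanSpace ℝ (Fin n) →ₗ[ℝ] EuclideanSpace ℝ (Fin n)) (hQ : ∀ x ∈ V, Q x = 0) :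
    BddByOutput A B C D (fun a j => Q (stateTraj A B 0 a j)) := by
  obtain ⟨k, hk⟩ := exists_nullingSteps_le A B C D V hV
  exact bdd_mod_nullingSteps A B C D k Q fun x hx => hQ x (hk hx)

end Bounded

/-! ### The two implications -/

section Directions

variable {n m p r d s : ℕ}
    {A : Matrix (Fin n) (Fin n) ℝ} {B : Matrix (Fin n) (Fin m) ℝ}
    {C : Matrix (Fin p) (Fin n) ℝ} {D : Matrix (Fin p) (Fin m) ℝ}
    {E : Matrix (Fin r) (Fin n) ℝ} {F : Matrix (Fin r) (Fin m) ℝ}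
    {V : Submodule ℝ (EuclideanSpace ℝ (Fin n))}
    {Vst : Matrix (Fin n) (Fin d) ℝ}
    {Mh : Matrix (Fin m) (Fin n) ℝ}
    {Φh : Matrix (Fin d) (Fin d) ℝ}

/-- If `(A+BM̂)|_{V*}` is Schur stable and no input invisible at the output acts inside `V`,
then bounded outputs force bounded performance signals. -/
lemma detectable_of_stable
    (hV : IsMaxOutputNulling A B C D V)
    (hVstSpan : LinearMap.range (matL Vst) = V ⊓ ctrlSubspace A B)
    (hVstInj : LinearMap.ker (matL Vst) = ⊥)
    (hM1 : ∀ v ∈ V, matL (A + B * Mh) v ∈ V) (hM2 : ∀ v ∈ V, matL (C + D * Mh) v = 0)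
    (hΦh : (A + B * Mh) * Vst = Vst * Φh)
    (hker : ∀ u, matL D u = 0 → matL B u ∈ V → matL B u = 0)
    (hnoti : LinearMap.ker (matL B) ⊓ LinearMap.ker (matL D) ≤ LinearMap.ker (matL F))
    (hst : ∀ lam : ℂ, Module.End.HasEigenvalue
      (Matrix.mulVecLin (Φh.map (algebraMap ℝ ℂ))) lam → ‖lam‖ < 1) :
    Detectable A B C D E F := by
  obtain ⟨Q, hQ⟩ := exists_ker_eq V
  have hQx := bdd_mod_V A B C D V hV Q fun x hx => (hQ x).2 hx
  -- the input splits as `a_k = M̂ x_k + b_k`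
  let b : (ℕ → EuclideanSpace ℝ (Fin m)) → ℕ → EuclideanSpace ℝ (Fin m) :=
    fun a k => a k - matL Mh (stateTraj A B 0 a k)
  have hstep : ∀ a k, stateTraj A B 0 a (k + 1) =
      matL (A + B * Mh) (stateTraj A B 0 a k) + matL B (b a k) := by
    intro a k
    simp only [b, stateTraj, matL_add_s10, matL_mul_s10, map_sub]
    abel
  have hout : ∀ {q : ℕ} (C' : Matrix (Fin q) (Fin n) ℝ) (D' : Matrix (Fin q) (Fin m) ℝ) a k,
      outTraj A B C' D' 0 a k =
        matL (C' + D' * Mh) (stateTraj A B 0 a k) + matL D' (b a k) := by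
    intro q C' D' a k
    simp only [b, outTraj, matL_add_s10, matL_mul_s10, map_sub]
    abel
  have hQAx : BddByOutput A B C D (fun a k => Q (matL (A + B * Mh) (stateTraj A B 0 a k))) :=
    BddByOutput.of_ker Q (Q ∘ₗ matL (A + B * Mh))
      (fun x hx => (hQ _).2 (hM1 x ((hQ x).1 hx))) hQx
  have hCx : BddByOutput A B C D (fun a k => matL (C + D * Mh) (stateTraj A B 0 a k)) :=
    BddByOutput.of_ker Q (matL (C + D * Mh)) (fun x hx => hM2 x ((hQ x).1 hx)) hQx
  have hQBb : BddByOutput A B C D (fun a k => Q (matL B (b a k))) := by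
    have h := hQx.shift.sub hQAx
    simpa only [hstep, map_add, add_sub_cancel_left] using h
  have hDb : BddByOutput A B C D (fun a k => matL D (b a k)) := by
    have h := (BddByOutput.output (A := A) (B := B) (C := C) (D := D)).sub hCx
    simpa only [hout, add_sub_cancel_left] using h
  have hpair := hQBb.prodMk hDb
  have hBb : BddByOutput A B C D (fun a k => matL B (b a k)) := by
    refine BddByOutput.of_ker ((Q ∘ₗ matL B).prod (matL D)) (matL B) ?_ hpair
    intro u hu
    have hu' : Q (matL B u) = 0 ∧ matL D u = 0 := by simpa using hu
    exact hker u hu'.2 ((hQ _).1 hu'.1)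
  have hFb : BddByOutput A B C D (fun a k => matL F (b a k)) := by
    refine BddByOutput.of_ker ((Q ∘ₗ matL B).prod (matL D)) (matL F) ?_ hpair
    intro u hu
    have hu' : Q (matL B u) = 0 ∧ matL D u = 0 := by simpa using hu
    exact hnoti ⟨hker u hu'.2 ((hQ _).1 hu'.1), hu'.2⟩
  -- coordinates of the state along `V*`, through a left inverse `P` of the basis matrix
  obtain ⟨P, hP⟩ := exists_genInv (matL Vst)
  have hPV : ∀ v, P (matL Vst v) = v := fun v => LinearMap.ker_eq_bot.1 hVstInj (hP v)
  have hu : BddByOutput A B C D (fun a k =>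
      stateTraj A B 0 a k - matL Vst (P (stateTraj A B 0 a k))) := by
    refine BddByOutput.of_ker_on (ctrlSubspace A B) (stateTraj_mem_ctrl A B) Q
      (LinearMap.id - matL Vst ∘ₗ P) ?_ hQx
    intro x hxC hx
    have hxV : x ∈ LinearMap.range (matL Vst) := by
      rw [hVstSpan]; exact ⟨(hQ x).1 hx, hxC⟩
    obtain ⟨v, rfl⟩ := hxV
    simp [hPV]
  have hw := (hu.map (P ∘ₗ matL (A + B * Mh))).add (hBb.map P)
  obtain ⟨cw, hcw⟩ := hw
  obtain ⟨cv, hcv⟩ := bibo_bound Φh hst cw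
  have hv : BddByOutput A B C D (fun a k => P (stateTraj A B 0 a k)) := by
    refine ⟨cv, fun a ha => hcv _ _ ?_ ?_ (hcw a ha)⟩
    · simp [stateTraj]
    · intro k
      have h1 : matL (A + B * Mh) (matL Vst (P (stateTraj A B 0 a k))) =
          matL Vst (matL Φh (P (stateTraj A B 0 a k))) := by
        rw [← matL_mul_s10, hΦh, matL_mul_s10]
      simp only []
      rw [hstep, map_add, LinearMap.comp_apply, map_sub (matL (A + B * Mh)), map_sub P,
        h1, hPV]
      abel
  have hx : BddByOutput A B C D (fun a k => stateTraj A B 0 a k) := by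
    have h := hu.add (hv.map (matL Vst))
    simpa only [sub_add_cancel] using h
  have hz : BddByOutput A B C D (fun a k => outTraj A B E F 0 a k) := by
    have h := (hx.map (matL (E + F * Mh))).add hFb
    simpa only [hout] using h
  obtain ⟨c, hc⟩ := hz
  refine ⟨|c| + 1, by positivity, 1, one_pos, fun a ⟨kz, hkz⟩ => ?_⟩
  by_contra! hcon
  have h1 := hc a (fun k => (hcon k).le) kz
  linarith [le_abs_self c]

/-- Superposing `n`-step transients: every bounded disturbance `h` of the dynamics `Φ̂` on `V*`
can be realized by an input producing a bounded output, so detectability forces the state of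
`v_{k+1} = Φ̂ v_k + h_{k+1}` to stay bounded. -/
lemma bounded_of_detectable
    (hdet : Detectable A B C D E F)
    (hVstC : ∀ g, matL Vst g ∈ ctrlSubspace A B)
    (hM2 : ∀ g, matL (C + D * Mh) (matL Vst g) = 0)
    (hΦh : (A + B * Mh) * Vst = Vst * Φh)
    (hker : LinearMap.ker (matL ((E + F * Mh) * Vst)) = ⊥) :
    ∀ β : ℝ, ∃ c : ℝ, ∀ h v : ℕ → EuclideanSpace ℝ (Fin d),
      (∀ j < n, h j = 0) → (∀ j, ‖h j‖ ≤ β) →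
      v 0 = 0 → (∀ k, v (k + 1) = matL Φh (v k) + h (k + 1)) → ∀ k, ‖v k‖ ≤ c := by
  intro β
  obtain ⟨δ, hδ, ε, hε, hdet⟩ := hdet
  obtain ⟨U, X, hX0, hXs, hXn⟩ := exists_steering A B (matL Vst) hVstC
  -- at time `k` the disturbance `h (k + n - i)` is in step `i` of its `n`-step transient
  have key : ∀ h v : ℕ → EuclideanSpace ℝ (Fin d), (∀ j < n, h j = 0) →
      v 0 = 0 → (∀ k, v (k + 1) = matL Φh (v k) + h (k + 1)) →
      ∃ a, ∀ k,
        outTraj A B C D 0 a k =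
          ∑ i ∈ Finset.range n, (matL C ∘ₗ X i + matL D ∘ₗ U i) (h (k + n - i)) ∧
        outTraj A B E F 0 a k = matL ((E + F * Mh) * Vst) (v k) +
          ∑ i ∈ Finset.range n, (matL E ∘ₗ X i + matL F ∘ₗ U i) (h (k + n - i)) := by
    intro h v hh hv0 hv
    let a : ℕ → EuclideanSpace ℝ (Fin m) := fun k =>
      matL Mh (matL Vst (v k)) + ∑ i ∈ Finset.range n, U i (h (k + n - i))
    have hst : ∀ k, stateTraj A B 0 a k =
        matL Vst (v k) + ∑ i ∈ Finset.range n, X i (h (k + n - i)) := by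
      intro k
      induction k with
      | zero =>
        have hz : ∀ i ∈ Finset.range n, X i (h (0 + n - i)) = 0 := by
          intro i hi
          have hi := Finset.mem_range.1 hi
          rcases Nat.eq_zero_or_pos i with rfl | hi0
          · simp [hX0]
          · rw [hh _ (by omega), map_zero]
        rw [Finset.sum_eq_zero hz, hv0]
        simp [stateTraj]
      | succ k ih =>
        have hfb : matL A (matL Vst (v k)) + matL B (matL Mh (matL Vst (v k))) =
            matL Vst (matL Φh (v k)) := by
          rw [← matL_mul_s10 Vst, ← hΦh, matL_mul_s10, matL_add_s10, matL_mul_s10]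
        have hsum : ∑ i ∈ Finset.range n, X (i + 1) (h (k + n - i)) =
            ∑ i ∈ Finset.range n, X i (h (k + 1 + n - i)) + matL Vst (h (k + 1)) := by
          have h1 := Finset.sum_range_succ (fun i => X i (h (k + 1 + n - i))) n
          have h2 := Finset.sum_range_succ' (fun i => X i (h (k + 1 + n - i))) n
          rw [hX0, LinearMap.zero_apply, add_zero] at h2
          rw [hXn, Nat.add_sub_cancel] at h1
          rw [← h1, h2]
          refine Finset.sum_congr rfl fun i _ => ?_
          congr 2
          omega
        have hsplit : ∑ i ∈ Finset.range n, X (i + 1) (h (k + n - i)) =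
            matL A (∑ i ∈ Finset.range n, X i (h (k + n - i))) +
              matL B (∑ i ∈ Finset.range n, U i (h (k + n - i))) := by
          rw [map_sum, map_sum, ← Finset.sum_add_distrib]
          exact Finset.sum_congr rfl fun i _ => hXs i _
        rw [hv, map_add, ← hfb, stateTraj, ih]
        simp only [a, map_add]
        rw [hsplit] at hsum
        rw [add_assoc _ (matL Vst (h (k + 1))), add_comm (matL Vst (h (k + 1))), ← hsum]
        abel
    have hout : ∀ {q : ℕ} (C' : Matrix (Fin q) (Fin n) ℝ) (D' : Matrix (Fin q) (Fin m) ℝ) (k : ℕ),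
        outTraj A B C' D' 0 a k = matL (C' + D' * Mh) (matL Vst (v k)) +
          ∑ i ∈ Finset.range n, (matL C' ∘ₗ X i + matL D' ∘ₗ U i) (h (k + n - i)) := by
      intro q C' D' k
      rw [outTraj, hst]
      simp only [a, map_add, map_sum, matL_add_s10, matL_mul_s10, LinearMap.add_apply,
        LinearMap.comp_apply, Finset.sum_add_distrib]
      abel
    refine ⟨a, fun k => ⟨?_, ?_⟩⟩
    · rw [hout, hM2, zero_add]
    · rw [hout, matL_mul_s10]
  have hbd : ∀ {q : ℕ} (L : ℕ → EuclideanSpace ℝ (Fin d) →ₗ[ℝ] EuclideanSpace ℝ (Fin q)),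
      ∃ K : ℝ, 0 ≤ K ∧ ∀ (w : ℕ → EuclideanSpace ℝ (Fin d)) (τ : ℝ), (∀ i, ‖w i‖ ≤ τ) →
        ‖∑ i ∈ Finset.range n, L i (w i)‖ ≤ K * τ := by
    intro q L
    refine ⟨∑ i ∈ Finset.range n, ‖LinearMap.toContinuousLinearMap (L i)‖,
      Finset.sum_nonneg fun i _ => norm_nonneg _, fun w τ hw => ?_⟩
    rw [Finset.sum_mul]
    refine norm_sum_le_of_le _ fun i _ => ?_
    exact ((LinearMap.toContinuousLinearMap (L i)).le_opNorm (w i)).trans (by gcongr; exact hw i)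
  obtain ⟨Ky, hKy0, hKy⟩ := hbd fun i => matL C ∘ₗ X i + matL D ∘ₗ U i
  obtain ⟨Kz, hKz0, hKz⟩ := hbd fun i => matL E ∘ₗ X i + matL F ∘ₗ U i
  obtain ⟨cE, hcE0, hcE⟩ := exists_bound (matL ((E + F * Mh) * Vst))
    (LinearMap.id : EuclideanSpace ℝ (Fin d) →ₗ[ℝ] EuclideanSpace ℝ (Fin d))
    (fun x hx => LinearMap.ker_eq_bot'.1 hker x hx)
  -- scaling by `τ` brings the output below the threshold `ε`
  let τ : ℝ := ε / (Ky * |β| + 1)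
  have hden : 0 < Ky * |β| + 1 := by positivity
  have hτ : 0 < τ := div_pos hε hden
  refine ⟨τ⁻¹ * (cE * (δ + Kz * (τ * |β|))), fun h v hh hb hv0 hv k => ?_⟩
  obtain ⟨a, ha⟩ := key (fun j => τ • h j) (fun j => τ • v j)
    (fun j hj => by simp [hh j hj]) (by simp [hv0]) (fun k => by simp [hv, smul_add])
  have hτh : ∀ j, ‖τ • h j‖ ≤ τ * |β| := by
    intro j
    rw [norm_smul, Real.norm_of_nonneg hτ.le]
    gcongr
    exact (hb j).trans (le_abs_self β)
  have hy : ∀ k, ‖outTraj A B C D 0 a k‖ < ε := by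
    intro k
    rw [(ha k).1]
    refine (hKy (fun i => τ • h (k + n - i)) _ fun i => hτh _).trans_lt ?_
    have : Ky * (τ * |β|) = ε * (Ky * |β|) / (Ky * |β| + 1) := by
      simp only [τ]; ring
    rw [this, div_lt_iff₀ hden]
    nlinarith
  have hz : ‖outTraj A B E F 0 a k‖ < δ := by
    by_contra! hcon
    obtain ⟨ky, hky⟩ := hdet a ⟨k, hcon⟩
    exact absurd (hy ky) (not_lt.2 hky)
  have hvk : ‖τ • v k‖ ≤ cE * (δ + Kz * (τ * |β|)) := by
    refine (hcE (τ • v k)).trans ?_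
    gcongr
    rw [← add_sub_cancel_right (matL ((E + F * Mh) * Vst) (τ • v k))
      (∑ i ∈ Finset.range n, (matL E ∘ₗ X i + matL F ∘ₗ U i) (τ • h (k + n - i))), ← (ha k).2]
    exact norm_sub_le_of_le hz.le (hKz (fun i => τ • h (k + n - i)) _ fun i => hτh _)
  rw [norm_smul, Real.norm_of_nonneg hτ.le] at hvk
  rw [inv_mul_eq_div, le_div_iff₀ hτ]
  linarith

/-- An eigenvalue `λ` with `1 ≤ |λ|` is excited resonantly: for the eigenvector `ξ` and
`μ = λ/|λ|`, disturbances `Re (ω μ^k ξ)` with a suitable phase `ω` make the state grow at least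
linearly. -/
lemma not_bounded_of_unstable (hunst : ∃ lam : ℂ, 1 ≤ ‖lam‖ ∧
      Module.End.HasEigenvalue (Matrix.mulVecLin (Φh.map (algebraMap ℝ ℂ))) lam) (N : ℕ) :
    ¬ ∀ β : ℝ, ∃ c : ℝ, ∀ h v : ℕ → EuclideanSpace ℝ (Fin d),
      (∀ j < N, h j = 0) → (∀ j, ‖h j‖ ≤ β) →
      v 0 = 0 → (∀ k, v (k + 1) = matL Φh (v k) + h (k + 1)) → ∀ k, ‖v k‖ ≤ c := by
  intro hbdd
  obtain ⟨lam, hlam, heig⟩ := hunst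
  obtain ⟨ξ, hξ⟩ := heig.exists_hasEigenvector
  have hξe : ∀ i, ∑ j, (Φh i j : ℂ) * ξ j = lam * ξ i := fun i => by
    have := congrFun hξ.apply_eq_smul i
    simpa [Matrix.mulVec, dotProduct] using this
  obtain ⟨l, hl⟩ := Function.ne_iff.1 hξ.2
  have hl : 0 < ‖ξ l‖ := norm_pos_iff.2 hl
  let ρ : ℂ →ₗ[ℝ] EuclideanSpace ℝ (Fin d) :=
    { toFun := fun c => WithLp.toLp 2 fun i => (c * ξ i).re
      map_add' := fun x y => by ext i; simp [add_mul]
      map_smul' := fun x y => by ext i; simp; ring }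
  have hρ : ∀ c, matL Φh (ρ c) = ρ (lam * c) := by
    intro c
    ext i
    have h1 : (lam * c * ξ i).re = (∑ j, (Φh i j : ℂ) * (c * ξ j)).re := by
      rw [mul_right_comm, ← hξe, Finset.sum_mul]
      congr 1
      exact Finset.sum_congr rfl fun j _ => by ring
    simp only [matL, Matrix.toLpLin_apply, Matrix.mulVec, dotProduct, ρ, LinearMap.coe_mk,
      AddHom.coe_mk]
    rw [h1, Complex.re_sum]
    exact Finset.sum_congr rfl fun j _ => by rw [Complex.re_ofReal_mul]
  have hlam0 : (‖lam‖ : ℂ) ≠ 0 := by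
    have : ‖lam‖ ≠ 0 := by positivity
    exact_mod_cast this
  let μ : ℂ := lam / ‖lam‖
  have hμ : ‖μ‖ = 1 := by
    have : ‖lam‖ ≠ 0 := by positivity
    simp [μ, this]
  have hμlam : lam = ‖lam‖ * μ := by
    simp only [μ]
    field_simp
  -- amplitude of the resonant state; disturbances start only at time `N`
  let t : ℕ → ℝ := fun k => Nat.rec 0 (fun k x => ‖lam‖ * x + if k + 1 < N then 0 else 1) k
  have ht0 : t 0 = 0 := rfl
  have hts : ∀ k, t (k + 1) = ‖lam‖ * t k + if k + 1 < N then 0 else 1 := fun k => rfl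
  have htpos : ∀ k, 0 ≤ t k := by
    intro k
    induction k with
    | zero => exact ht0.ge
    | succ k ih => rw [hts]; split_ifs <;> positivity
  have htlow : ∀ k : ℕ, (k : ℝ) ≤ t (N + k) := by
    intro k
    induction k with
    | zero => simpa using htpos N
    | succ k ih =>
      rw [← add_assoc, hts, if_neg (by omega)]
      push_cast
      nlinarith [htpos (N + k)]
  obtain ⟨c, hc⟩ := hbdd ‖LinearMap.toContinuousLinearMap ρ‖
  obtain ⟨q, hq⟩ := exists_nat_gt (c / ‖ξ l‖)
  -- the phase is chosen so that the coordinate `l` of the state at time `N + q` is maximal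
  let ω : ℂ := (starRingEnd ℂ) (μ ^ (N + q) * ξ l) / ‖ξ l‖
  have hω : ‖ω‖ = 1 := by
    simp [ω, hμ, hl.ne']
  let v : ℕ → EuclideanSpace ℝ (Fin d) := fun k => ρ (ω * μ ^ k * Complex.ofReal (t k))
  have hvb := hc (fun j => if j < N then 0 else ρ (ω * μ ^ j)) v
    (fun j hj => by simp [hj])
    (fun j => by
      split_ifs
      · simp
      · refine ((LinearMap.toContinuousLinearMap ρ).le_opNorm _).trans ?_
        simp [hω, hμ])
    (by simp [v, ht0])
    (fun k => by
      simp only [v]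
      rw [hρ, hts]
      have e : lam * (ω * μ ^ k * t k) = ω * μ ^ (k + 1) * (‖lam‖ * t k : ℝ) := by
        rw [pow_succ]
        conv_lhs => rw [hμlam]
        push_cast
        ring
      rw [e]
      split_ifs
      · simp
      · rw [← map_add]
        push_cast
        congr 1
        ring) (N + q)
  have hcoord : ‖ρ (ω * μ ^ (N + q) * Complex.ofReal (t (N + q))) l‖ = t (N + q) * ‖ξ l‖ := by
    have e : ω * μ ^ (N + q) * Complex.ofReal (t (N + q)) * ξ l = ((t (N + q) * ‖ξ l‖ : ℝ) : ℂ) := by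
      have h1 : (starRingEnd ℂ) (μ ^ (N + q) * ξ l) * (μ ^ (N + q) * ξ l) = (‖ξ l‖ : ℂ) ^ 2 := by
        rw [Complex.conj_mul']
        simp [hμ]
      have h2 : (‖ξ l‖ : ℂ) ≠ 0 := by exact_mod_cast hl.ne'
      calc ω * μ ^ (N + q) * Complex.ofReal (t (N + q)) * ξ l
          = Complex.ofReal (t (N + q)) * ((starRingEnd ℂ) (μ ^ (N + q) * ξ l) * (μ ^ (N + q) * ξ l)) / ‖ξ l‖ := by
            simp only [ω]; ring
        _ = ((t (N + q) * ‖ξ l‖ : ℝ) : ℂ) := by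
            rw [h1]; push_cast; field_simp
    simp only [ρ, LinearMap.coe_mk, AddHom.coe_mk]
    rw [e, Complex.ofReal_re, Real.norm_of_nonneg (mul_nonneg (htpos _) hl.le)]
  have h1 := (PiLp.norm_apply_le (ρ (ω * μ ^ (N + q) * Complex.ofReal (t (N + q)))) l).trans hvb
  rw [hcoord] at h1
  rw [div_lt_iff₀ hl] at hq
  have h2 := mul_le_mul_of_nonneg_right (htlow q) hl.le
  linarith

end Directions

/-- Remark 2 of the paper: when `ker((E+FM̂)V*) = {0}` and conditions (i), (ii)
of Theorem 1 fail, `B̂_N = 0` and vulnerability is equivalent to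
`(A+BM̂)|_{V*}` having an unstable eigenvalue. -/
theorem vulnerability_trivial_kernel_case {n m p r d s : ℕ}
    (A : Matrix (Fin n) (Fin n) ℝ) (B : Matrix (Fin n) (Fin m) ℝ)
    (C : Matrix (Fin p) (Fin n) ℝ) (D : Matrix (Fin p) (Fin m) ℝ)
    (E : Matrix (Fin r) (Fin n) ℝ) (F : Matrix (Fin r) (Fin m) ℝ)
    (V : Submodule ℝ (EuclideanSpace ℝ (Fin n)))
    (hV : IsMaxOutputNulling A B C D V) (hVne : V ≠ ⊥)
    (Vst : Matrix (Fin n) (Fin d) ℝ)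
    (hVstSpan : LinearMap.range (matL Vst) = V ⊓ ctrlSubspace A B)
    (hVstInj : LinearMap.ker (matL Vst) = ⊥)
    (Mh : Matrix (Fin m) (Fin n) ℝ) (Nh : Matrix (Fin m) (Fin s) ℝ)
    (hMNh : IsFriend A B C D V Mh Nh)
    (BN : Matrix (Fin d) (Fin s) ℝ) (hBN : B * Nh = Vst * BN)
    (Φh : Matrix (Fin d) (Fin d) ℝ) (hΦh : (A + B * Mh) * Vst = Vst * Φh)
    (hnoti : LinearMap.ker (matL B) ⊓ LinearMap.ker (matL D) ≤
      LinearMap.ker (matL F))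
    (hnotii : ¬ ∃ (s' : ℕ) (M : Matrix (Fin m) (Fin n) ℝ)
        (N : Matrix (Fin m) (Fin s') ℝ),
      IsFriend A B C D V M N ∧
      (F * N ≠ 0 ∨
        ∃ j : ℕ, j < n ∧ (E + F * M) * (A + B * M) ^ j * (B * N) ≠ 0))
    (hker : LinearMap.ker (matL ((E + F * Mh) * Vst)) = ⊥) :
    BN = 0 ∧
    (¬ Detectable A B C D E F ↔
      ∃ lam : ℂ, 1 ≤ ‖lam‖ ∧
        Module.End.HasEigenvalue
          (Matrix.mulVecLin (Φh.map (algebraMap ℝ ℂ))) lam) := by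
  have hn : 0 < n := by
    rcases Nat.eq_zero_or_pos n with rfl | hn
    · exact absurd (Subsingleton.elim V ⊥) hVne
    · exact hn
  have hBNz : (E + F * Mh) * (B * Nh) = 0 := by
    by_contra h
    exact hnotii ⟨s, Mh, Nh, hMNh, Or.inr ⟨0, hn, by simpa using h⟩⟩
  have hBN0 : BN = 0 := by
    refine matL_eq_zero fun x => ?_
    have h1 : matL ((E + F * Mh) * Vst) (matL BN x) = 0 := by
      rw [← matL_mul_s10, Matrix.mul_assoc, ← hBN, hBNz]
      simp [matL]
    exact LinearMap.ker_eq_bot'.1 hker _ h1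
  refine ⟨hBN0, ?_⟩
  obtain ⟨hM1, hM2, -, hN2⟩ := hMNh
  have hVst : ∀ g, matL Vst g ∈ V ⊓ ctrlSubspace A B := fun g => hVstSpan ▸ ⟨g, rfl⟩
  constructor
  · intro hvul
    by_contra! hst
    refine hvul (detectable_of_stable hV hVstSpan hVstInj hM1 hM2 hΦh ?_ hnoti
      fun lam hlam => ?_)
    · intro u hu1 hu2
      have h : matL B u ∈ LinearMap.range (matL (B * Nh)) := by
        rw [hN2]; exact ⟨⟨u, hu1, rfl⟩, hu2⟩
      rw [hBN, hBN0] at h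
      simpa [matL] using h
    · by_contra! h
      exact hst lam h hlam
  · intro hunst hdet
    exact not_bounded_of_unstable hunst n (bounded_of_detectable hdet (fun g => (hVst g).2)
      (fun g => hM2 _ (hVst g).1) hΦh hker)
end
end
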